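/- Fix an integer n ≥ 1. Let 𝒮 be the set of biquadratic fields K = ℚ(√a, √b) ⊆ ℂ with a, b odd squarefree integers and [K:ℚ] = 4, and let 𝒮_n(X) be the number of K ∈ 𝒮 with genus number 2ⁿ, i.e. with ω(|Δ_K|) = n + 2, and |Δ_K| ≤ X. Then there is a constant C(n) such that for all sufficiently large X, 𝒮_n(X) ≤ C(n) · (√X / log X) · (log log X)^{n+1}. -/

import Mathlib

open IntermediateField NumberField Filter
noncomputable section
open scoped Classical
def biquad (d₁ d₂ : ℤ) : IntermediateField ℚ ℂ :=
  IntermediateField.adjoin ℚ {x : ℂ | x ^ 2 = (d₁ : ℂ) ∨ x ^ 2 = (d₂ : ℂ)}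
def biquadFamily : Set (IntermediateField ℚ ℂ) :=
  {K | ∃ a b : ℤ, Odd a ∧ Odd b ∧ Squarefree a ∧ Squarefree b ∧
    Module.finrank ℚ K = 4 ∧ K = biquad a b}
def absDisc (K : IntermediateField ℚ ℂ) : ℕ :=
  if h : FiniteDimensional ℚ K then
    haveI := h
    haveI : NumberField K := ⟨⟩
    (NumberField.discr K).natAbs
  else 0
/-- The number of `K ∈ 𝒮` with genus number `2ⁿ` (i.e. `ω(|Δ_K|) = n + 2`) and `|Δ_K| ≤ X`. -/
def countSn (n : ℕ) (X : ℝ) : ℕ :=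
  Nat.card {K : IntermediateField ℚ ℂ // K ∈ biquadFamily ∧
    (absDisc K).primeFactors.card = n + 2 ∧ (absDisc K : ℝ) ≤ X}

/-!
Let `K = ℚ(√a, √b)` be biquadratic with `a`, `b` squarefree. A prime `p ∣ a` is ramified: the ideal
`I = (√a, p)` satisfies `I ^ 2 = (p)`, so `I` divides the different of `K`, and taking norms
`p ^ 2 ∣ Δ_K`. Hence `m = lcm(|a|, |b|)` satisfies `m ^ 2 ∣ Δ_K`, so `m ≤ √X` and `m` has at most
`ω(Δ_K)` prime factors, while each such `m` comes from a bounded number of fields.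

The number of `m ≤ x` with at most `k + 1` prime factors is `O(x (log log x) ^ k / log x)`, by
induction on `k` from Chebyshev's bound for `π`: a composite `m` has its smallest prime factor
`p ≤ √m`, so `log (x / p)` is comparable to `log x` when the induction hypothesis is applied to
`m / p ≤ x / p`, and summing over `p` contributes one factor `∑ 1 / p = O(log log x)`.
-/

open scoped ArithmeticFunction.Omega

/-! ### Ramification in radical extensions -/

section Discriminant

theorem span_pair_pow_eq_span_singleton {R : Type*} [CommRing R] {s p c : R} {e : ℕ}
    (he : e ≠ 0) (hs : s ^ e = p * c) (hpc : IsCoprime p c) :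
    Ideal.span {s, p} ^ e = Ideal.span {p} := by
  apply le_antisymm
  · have hmap : (Ideal.span {s, p} ^ e).map (Ideal.Quotient.mk (Ideal.span {p})) = ⊥ := by
      have hp : Ideal.Quotient.mk (Ideal.span {p}) p = 0 :=
        Ideal.Quotient.eq_zero_iff_mem.mpr (Ideal.mem_span_singleton_self p)
      rw [Ideal.map_pow, Ideal.map_span, Set.image_pair, hp, Ideal.span_pair_zero,
        Ideal.span_singleton_pow, ← map_pow, hs, map_mul, hp, zero_mul, Ideal.span_singleton_zero]
    simpa only [Ideal.map_eq_bot_iff_le_ker, Ideal.mk_ker] using hmap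
  · obtain ⟨u, v, huv⟩ := hpc.pow_left (m := e - 1)
    have hp : u * p ^ e + v * s ^ e = p := by
      rw [hs, ← mul_pow_sub_one he p]
      linear_combination p * huv
    have hmem : u * p ^ e + v * s ^ e ∈ Ideal.span {s, p} ^ e := add_mem
      (Ideal.mul_mem_left _ _ (Ideal.pow_mem_pow (Ideal.subset_span (by simp)) e))
      (Ideal.mul_mem_left _ _ (Ideal.pow_mem_pow (Ideal.subset_span (by simp)) e))
    rwa [hp, ← Ideal.span_singleton_le_iff_mem] at hmem

variable {K : Type*} [Field K] [NumberField K]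

theorem absNorm_span_intCast (m : ℤ) :
    Ideal.absNorm (Ideal.span {(m : 𝓞 K)}) = m.natAbs ^ Module.finrank ℚ K := by
  rw [Ideal.absNorm_span_singleton, ← eq_intCast (algebraMap ℤ (𝓞 K)), Algebra.norm_algebraMap,
    RingOfIntegers.rank, Int.natAbs_pow]

theorem pow_dvd_discr_pow_of_prime_of_pow_eq_mul {p c : ℤ} (hp : Prime p) (hpc : IsCoprime p c)
    {s : 𝓞 K} {e : ℕ} (he : e ≠ 0) (hs : s ^ e = p * c) :
    p ^ (Module.finrank ℚ K * (e - 1)) ∣ discr K ^ e := by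
  set I : Ideal (𝓞 K) := Ideal.span {s, (p : 𝓞 K)}
  have hIe : I ^ e = Ideal.span {(p : 𝓞 K)} :=
    span_pair_pow_eq_span_singleton he hs (by simpa using hpc.map (Int.castRingHom (𝓞 K)))
  have hdiff : I ^ (e - 1) ∣ differentIdeal ℤ (𝓞 K) := by
    have : (Ideal.span {p}).IsMaximal :=
      ((Ideal.span_singleton_prime hp.ne_zero).mpr hp).isMaximal (by simpa using hp.ne_zero)
    exact pow_sub_one_dvd_differentIdeal ℤ (p := Ideal.span {p}) I e
      (by simpa using hp.ne_zero) (by simp [hIe, Ideal.map_span])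
  have hnorm : Ideal.absNorm I ^ e = p.natAbs ^ Module.finrank ℚ K := by
    rw [← map_pow, hIe, absNorm_span_intCast]
  have hdvd : Ideal.absNorm I ^ (e - 1) ∣ (discr K).natAbs := by
    rw [← map_pow, ← absNorm_differentIdeal K (𝓞 K)]
    exact Ideal.absNorm_dvd_absNorm_of_le (Ideal.dvd_iff_le.mp hdiff)
  rw [← Int.natAbs_dvd_natAbs, Int.natAbs_pow, Int.natAbs_pow, pow_mul, ← hnorm, pow_right_comm]
  exact pow_dvd_pow_of_dvd hdvd e

theorem pow_dvd_discr_pow_of_squarefree_of_pow_eq {a : ℤ} (ha : Squarefree a) {x : K} {e : ℕ}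
    (hx : x ^ e = a) : a ^ (Module.finrank ℚ K * (e - 1)) ∣ discr K ^ e := by
  rcases eq_or_ne e 0 with rfl | he
  · simp
  obtain ⟨s, rfl⟩ : ∃ s : 𝓞 K, algebraMap (𝓞 K) K s = x :=
    ⟨⟨x, .of_pow (Nat.pos_of_ne_zero he) (hx ▸ isIntegral_intCast a)⟩, rfl⟩
  have hs : s ^ e = a := by
    apply FaithfulSMul.algebraMap_injective (𝓞 K) K
    rw [map_pow, hx, map_intCast]
  have hprime : ∀ p ∈ a.natAbs.primeFactors,
      p ^ (Module.finrank ℚ K * (e - 1)) ∣ (discr K ^ e).natAbs := by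
    intro p hp
    obtain ⟨c, rfl⟩ := Int.natCast_dvd.mpr (Nat.dvd_of_mem_primeFactors hp)
    have hp' : Prime (p : ℤ) := Nat.prime_iff_prime_int.mp (Nat.prime_of_mem_primeFactors hp)
    have hpc : IsCoprime (p : ℤ) c := (squarefree_mul_iff.mp ha).1.isCoprime
    have := pow_dvd_discr_pow_of_prime_of_pow_eq_mul hp' hpc he (hs.trans (Int.cast_mul _ _))
    rw [← Int.natCast_dvd]
    exact_mod_cast this
  rw [← Int.natAbs_dvd_natAbs, Int.natAbs_pow,
    ← Nat.prod_primeFactors_of_squarefree (Int.squarefree_natAbs.mpr ha), ← Finset.prod_pow]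
  refine Finset.prod_dvd_of_isRelPrime (fun p hp q hq hpq ↦ ?_) hprime
  have hpq_coprime : p.Coprime q := (Nat.coprime_primes (Nat.prime_of_mem_primeFactors hp)
    (Nat.prime_of_mem_primeFactors hq)).mpr hpq
  exact Nat.coprime_iff_isRelPrime.mp (hpq_coprime.pow _ _)

theorem sq_dvd_discr_of_sq_eq (hK : Module.finrank ℚ K = 4) {a : ℤ} (ha : Squarefree a)
    {x : K} (hx : x ^ 2 = a) : a ^ 2 ∣ discr K := by
  have h := pow_dvd_discr_pow_of_squarefree_of_pow_eq ha hx
  rw [hK, show 4 * (2 - 1) = 2 * 2 from rfl, pow_mul] at h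
  exact (Int.pow_dvd_pow_iff two_ne_zero).mp h

end Discriminant

/-! ### Sums over primes -/

theorem one_lt_sqrt {x : ℝ} (hx : 1 < x) : 1 < √x :=
  Real.lt_sqrt_of_sq_lt (by simpa)

theorem sqrt_le_div_of_le_sqrt {x y : ℝ} (hy : 0 < y) (hyx : y ≤ √x) : √x ≤ x / y := by
  rw [← Real.div_sqrt]
  have hx := (Real.sqrt_pos.mp (hy.trans_le hyx)).le
  gcongr

theorem div_div_log_div_le {x y : ℝ} (hx : 1 < x) (hy : 0 < y) (hyx : y ≤ √x) :
    x / y / Real.log (x / y) ≤ x / Real.log x * (2 * y⁻¹) := by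
  have hlog : 0 < Real.log x := Real.log_pos hx
  have hlog_le : Real.log x / 2 ≤ Real.log (x / y) := by
    rw [← Real.log_sqrt (by linarith)]
    exact Real.log_le_log (by positivity) (sqrt_le_div_of_le_sqrt hy hyx)
  calc x / y / Real.log (x / y) ≤ x / y / (Real.log x / 2) := by gcongr
    _ = x / Real.log x * (2 * y⁻¹) := by field_simp

theorem primeCounting_add_one_le {x : ℝ} (hx : 1 < x) :
    (Nat.primeCounting ⌊x⌋₊ + 1 : ℝ) ≤ 6 * (x / Real.log x) := by
  have hx0 : 0 < x := by linarith
  have hlog : 0 < Real.log x := Real.log_pos hx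
  have hsqrt : √x ≤ 2 * (x / Real.log x) := by
    have hlogsqrt := Real.log_le_self (Real.sqrt_nonneg x)
    rw [Real.log_sqrt hx0.le] at hlogsqrt
    rw [← mul_div_assoc, le_div_iff₀ hlog]
    nlinarith [Real.mul_self_sqrt hx0.le, Real.sqrt_nonneg x]
  have hone : 1 ≤ x / Real.log x := (one_le_div hlog).mpr (Real.log_le_self hx0.le)
  have hlog4 : Real.log 4 ≤ 3 / 2 := by
    rw [show (4 : ℝ) = 2 ^ 2 by norm_num, Real.log_pow]
    push_cast
    linarith [Real.log_two_lt_d9]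
  calc (Nat.primeCounting ⌊x⌋₊ + 1 : ℝ)
      ≤ Real.log 4 * x / Real.log √x + √x + 1 := by gcongr; exact Chebyshev.pi_le_log4_mul_div hx
    _ = 2 * Real.log 4 * (x / Real.log x) + √x + 1 := by
        rw [Real.log_sqrt hx0.le]
        field_simp
    _ ≤ 6 * (x / Real.log x) := by nlinarith

/-- The sum `∑ 1 / p` over the primes `p ≤ x`, the quantity estimated by Mertens' second theorem. -/
def primeReciprocalSum (x : ℝ) : ℝ := ∑ p ∈ Nat.primesLE ⌊x⌋₊, (p : ℝ)⁻¹

theorem primeReciprocalSum_nonneg (x : ℝ) : 0 ≤ primeReciprocalSum x :=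
  Finset.sum_nonneg fun _ _ ↦ by positivity

theorem primeReciprocalSum_mono : Monotone primeReciprocalSum := fun _ _ h ↦
  Finset.sum_le_sum_of_subset_of_nonneg (Nat.primesLE_mono (Nat.floor_mono h))
    fun _ _ _ ↦ by positivity

theorem primeReciprocalSum_two_pow_succ_le (N : ℕ) :
    primeReciprocalSum (2 ^ (N + 1)) ≤ primeReciprocalSum (2 ^ N) + 18 * ((N + 1 : ℕ) : ℝ)⁻¹ := by
  set S := Nat.primesLE ⌊(2 : ℝ) ^ (N + 1)⌋₊
  set T := Nat.primesLE ⌊(2 : ℝ) ^ N⌋₊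
  have hTS : T ⊆ S :=
    Nat.primesLE_mono (Nat.floor_mono (pow_le_pow_right₀ one_le_two N.le_succ))
  have hterm : ∀ p ∈ S \ T, (p : ℝ)⁻¹ ≤ (2 ^ N)⁻¹ := by
    intro p hp
    obtain ⟨hpS, hpT⟩ := Finset.mem_sdiff.mp hp
    have hlt : ⌊(2 : ℝ) ^ N⌋₊ < p := by
      by_contra! hle
      exact hpT (Nat.mem_primesLE.mpr ⟨hle, Nat.prime_of_mem_primesLE hpS⟩)
    gcongr
    exact (Nat.lt_of_floor_lt hlt).le
  have hcard : ((S \ T).card : ℝ) ≤ 6 * (2 ^ (N + 1) / Real.log (2 ^ (N + 1))) := calc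
    ((S \ T).card : ℝ) ≤ S.card + 1 := by
      exact_mod_cast (Finset.card_le_card Finset.sdiff_subset).trans S.card.le_succ
    _ ≤ _ := by
      rw [Nat.primesLE_card_eq_primeCounting]
      exact primeCounting_add_one_le (one_lt_pow₀ one_lt_two N.succ_ne_zero)
  have hlog2 : 12 / Real.log 2 ≤ 18 := by
    rw [div_le_iff₀ (by positivity)]
    linarith [Real.log_two_gt_d9]
  calc primeReciprocalSum (2 ^ (N + 1))
      = primeReciprocalSum (2 ^ N) + ∑ p ∈ S \ T, (p : ℝ)⁻¹ := by
        rw [add_comm (primeReciprocalSum _)]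
        exact (Finset.sum_sdiff (f := fun p : ℕ ↦ (p : ℝ)⁻¹) hTS).symm
    _ ≤ primeReciprocalSum (2 ^ N) + (S \ T).card * (2 ^ N)⁻¹ := by
        gcongr
        rw [← nsmul_eq_mul]
        exact Finset.sum_le_card_nsmul _ _ _ hterm
    _ ≤ primeReciprocalSum (2 ^ N) +
          6 * (2 ^ (N + 1) / Real.log (2 ^ (N + 1))) * (2 ^ N)⁻¹ := by gcongr
    _ = primeReciprocalSum (2 ^ N) + 12 / Real.log 2 * ((N + 1 : ℕ) : ℝ)⁻¹ := by
        rw [Real.log_pow]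
        field_simp
        ring
    _ ≤ _ := by gcongr

theorem primeReciprocalSum_two_pow_le (N : ℕ) : primeReciprocalSum (2 ^ N) ≤ 18 * harmonic N := by
  induction N with
  | zero => simp [primeReciprocalSum]
  | succ N ih =>
    rw [harmonic_succ]
    push_cast
    have := primeReciprocalSum_two_pow_succ_le N
    push_cast at this
    linarith

theorem eventually_primeReciprocalSum_le :
    ∀ᶠ x : ℝ in atTop, primeReciprocalSum x ≤ 72 * Real.log (Real.log x) := by
  filter_upwards [eventually_gt_atTop 0, Real.tendsto_log_atTop.eventually_ge_atTop 1,
    (Real.tendsto_log_atTop.comp Real.tendsto_log_atTop).eventually_ge_atTop 1]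
    with x hx hlog (hloglog : 1 ≤ Real.log (Real.log x))
  set N := ⌈2 * Real.log x⌉₊
  have hN_ge : 2 * Real.log x ≤ N := Nat.le_ceil _
  have hN_le : N ≤ 3 * Real.log x := by
    linarith [Nat.ceil_lt_add_one (a := 2 * Real.log x) (by linarith)]
  have hxN : x ≤ 2 ^ N := by
    rw [← Real.log_le_log_iff hx (by positivity), Real.log_pow]
    nlinarith [Real.log_two_gt_d9]
  have hlogN : Real.log N ≤ 2 + Real.log (Real.log x) := calc
    Real.log N ≤ Real.log (3 * Real.log x) := Real.log_le_log (by linarith) hN_le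
    _ = Real.log 3 + Real.log (Real.log x) := Real.log_mul (by norm_num) (by linarith)
    _ ≤ _ := by
      gcongr
      linarith [Real.log_le_sub_one_of_pos (show (0 : ℝ) < 3 by norm_num)]
  calc primeReciprocalSum x
      ≤ primeReciprocalSum (2 ^ N) := primeReciprocalSum_mono hxN
    _ ≤ 18 * harmonic N := primeReciprocalSum_two_pow_le N
    _ ≤ 18 * (1 + Real.log N) := by gcongr; exact harmonic_le_one_add_log N
    _ ≤ 72 * Real.log (Real.log x) := by linarith

/-! ### Integers with few prime factors -/

theorem squarefree_lcm {m n : ℕ} (hm : Squarefree m) (hn : Squarefree n) :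
    Squarefree (m.lcm n) := by
  rw [Nat.squarefree_iff_factorization_le_one (Nat.lcm_ne_zero hm.ne_zero hn.ne_zero),
    Nat.factorization_lcm hm.ne_zero hn.ne_zero]
  exact fun p ↦ sup_le (hm.natFactorization_le_one p) (hn.natFactorization_le_one p)

theorem cardFactors_le_card_primeFactors {m n : ℕ} (hm : Squarefree m) (hmn : m ∣ n)
    (hn : n ≠ 0) : Ω m ≤ n.primeFactors.card := by
  rw [← (ArithmeticFunction.cardDistinctFactors_eq_cardFactors_iff_squarefree hm.ne_zero).mpr hm]
  exact Finset.card_le_card (Nat.primeFactors_mono hmn hn)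

theorem card_divisors_le_two_pow_cardFactors {m : ℕ} (hm : m ≠ 0) :
    m.divisors.card ≤ 2 ^ Ω m := by
  rw [Nat.card_divisors hm, ArithmeticFunction.cardFactors_eq_sum_factorization, Finsupp.sum,
    Nat.support_factorization, ← Finset.prod_pow_eq_pow_sum]
  exact Finset.prod_le_prod' fun p _ ↦ Nat.lt_two_pow_self

/-- The positive integers `m ≤ x` with at most `k` prime factors, counted with multiplicity; these
are the candidates for the lcm of the radicands of a biquadratic field. -/
def almostPrimesLE (k : ℕ) (x : ℝ) : Finset ℕ := {m ∈ Finset.Icc 1 ⌊x⌋₊ | Ω m ≤ k}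

theorem mem_almostPrimesLE {k m : ℕ} {x : ℝ} :
    m ∈ almostPrimesLE k x ↔ m ≠ 0 ∧ (m : ℝ) ≤ x ∧ Ω m ≤ k := by
  rw [almostPrimesLE, Finset.mem_filter, Finset.mem_Icc, Nat.one_le_iff_ne_zero, and_assoc]
  exact and_congr_right fun hm ↦ and_congr_left' (Nat.le_floor_iff' hm)

theorem almostPrimesLE_one_subset (x : ℝ) :
    almostPrimesLE 1 x ⊆ insert 1 (Nat.primesLE ⌊x⌋₊) := by
  intro m hm
  obtain ⟨hm0, hmx, hΩ⟩ := mem_almostPrimesLE.mp hm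
  rcases Nat.le_one_iff_eq_zero_or_eq_one.mp hΩ with h | h
  · have := ArithmeticFunction.cardFactors_eq_zero_iff_eq_zero_or_one.mp h
    simp_all
  · have := ArithmeticFunction.cardFactors_eq_one_iff_prime.mp h
    exact Finset.mem_insert_of_mem (Nat.mem_primesLE.mpr ⟨Nat.le_floor hmx, this⟩)

theorem card_almostPrimesLE_one_le {x : ℝ} (hx : 1 < x) :
    ((almostPrimesLE 1 x).card : ℝ) ≤ 6 * (x / Real.log x) := by
  refine le_trans ?_ (primeCounting_add_one_le hx)
  have h := (Finset.card_le_card (almostPrimesLE_one_subset x)).trans (Finset.card_insert_le _ _)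
  rw [Nat.primesLE_card_eq_primeCounting] at h
  exact_mod_cast h

theorem almostPrimesLE_succ_subset (k : ℕ) (x : ℝ) :
    almostPrimesLE (k + 1) x ⊆ almostPrimesLE 1 x ∪
      (Nat.primesLE ⌊√x⌋₊).biUnion fun p ↦ (almostPrimesLE k (x / p)).image (p * ·) := by
  intro m hm
  obtain ⟨hm0, hmx, hΩ⟩ := mem_almostPrimesLE.mp hm
  by_cases hΩ1 : Ω m ≤ 1
  · exact Finset.mem_union_left _ (mem_almostPrimesLE.mpr ⟨hm0, hmx, hΩ1⟩)
  have hprime : m.minFac.Prime := Nat.minFac_prime (by rintro rfl; simp at hΩ1)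
  have hsq : m.minFac ^ 2 ≤ m := Nat.minFac_sq_le_self (Nat.pos_of_ne_zero hm0) fun h ↦
    hΩ1 (ArithmeticFunction.cardFactors_apply_prime h).le
  obtain ⟨p, hp⟩ : ∃ p, p = m.minFac := ⟨_, rfl⟩
  rw [← hp] at hprime hsq
  obtain ⟨q, rfl⟩ : p ∣ m := hp ▸ m.minFac_dvd
  have hq0 : q ≠ 0 := right_ne_zero_of_mul hm0
  rw [ArithmeticFunction.cardFactors_mul hprime.ne_zero hq0,
    ArithmeticFunction.cardFactors_apply_prime hprime] at hΩ
  refine Finset.mem_union_right _ (Finset.mem_biUnion.mpr ⟨p, Nat.mem_primesLE.mpr ⟨?_, hprime⟩,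
    Finset.mem_image_of_mem _ (mem_almostPrimesLE.mpr ⟨hq0, ?_, by omega⟩)⟩)
  · exact Nat.le_floor (Real.le_sqrt_of_sq_le (le_trans (by exact_mod_cast hsq) hmx))
  · rw [le_div_iff₀' (by exact_mod_cast hprime.pos)]
    exact_mod_cast hmx

theorem card_almostPrimesLE_succ_le (k : ℕ) (x : ℝ) :
    (almostPrimesLE (k + 1) x).card ≤
      (almostPrimesLE 1 x).card + ∑ p ∈ Nat.primesLE ⌊√x⌋₊, (almostPrimesLE k (x / p)).card :=
  (Finset.card_le_card (almostPrimesLE_succ_subset k x)).trans <|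
    (Finset.card_union_le _ _).trans <| Nat.add_le_add_left
      (Finset.card_biUnion_le.trans <| Finset.sum_le_sum fun _ _ ↦ Finset.card_image_le) _

theorem card_almostPrimesLE_le (k : ℕ) {x : ℝ} (hx : 1 < x) :
    ((almostPrimesLE (k + 1) x).card : ℝ) ≤
      6 * (x / Real.log x) * (1 + 2 * primeReciprocalSum x) ^ k := by
  induction k generalizing x with
  | zero => simpa using card_almostPrimesLE_one_le hx
  | succ k ih =>
    have hx0 : 0 < x := by linarith
    have hlog : 0 < Real.log x := Real.log_pos hx
    set P := primeReciprocalSum x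
    have hP : 0 ≤ P := primeReciprocalSum_nonneg x
    have hquot : ∀ p ∈ Nat.primesLE ⌊√x⌋₊, ((almostPrimesLE (k + 1) (x / p)).card : ℝ) ≤
        6 * (x / Real.log x) * (1 + 2 * P) ^ k * (2 * (p : ℝ)⁻¹) := by
      intro p hp
      obtain ⟨hp_le, hprime⟩ := Nat.mem_primesLE.mp hp
      have hp0 : (0 : ℝ) < p := by exact_mod_cast hprime.pos
      have hp_sqrt : (p : ℝ) ≤ √x := (Nat.le_floor_iff (Real.sqrt_nonneg x)).mp hp_le
      have hmono : primeReciprocalSum (x / p) ≤ P :=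
        primeReciprocalSum_mono (div_le_self hx0.le (by exact_mod_cast hprime.one_le))
      have hnonneg := primeReciprocalSum_nonneg (x / p)
      calc ((almostPrimesLE (k + 1) (x / p)).card : ℝ)
          ≤ 6 * (x / p / Real.log (x / p)) * (1 + 2 * primeReciprocalSum (x / p)) ^ k :=
            ih ((one_lt_sqrt hx).trans_le (sqrt_le_div_of_le_sqrt hp0 hp_sqrt))
        _ ≤ 6 * (x / Real.log x * (2 * (p : ℝ)⁻¹)) * (1 + 2 * P) ^ k := by
            gcongr
            exact div_div_log_div_le hx hp0 hp_sqrt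
        _ = 6 * (x / Real.log x) * (1 + 2 * P) ^ k * (2 * (p : ℝ)⁻¹) := by ring
    have hsum : ∑ p ∈ Nat.primesLE ⌊√x⌋₊, (p : ℝ)⁻¹ ≤ P :=
      primeReciprocalSum_mono (Real.sqrt_le_self_iff.mpr (Or.inr hx.le))
    calc ((almostPrimesLE (k + 1 + 1) x).card : ℝ)
        ≤ (almostPrimesLE 1 x).card +
            ∑ p ∈ Nat.primesLE ⌊√x⌋₊, ((almostPrimesLE (k + 1) (x / p)).card : ℝ) := by
          exact_mod_cast card_almostPrimesLE_succ_le (k + 1) x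
      _ ≤ 6 * (x / Real.log x) + ∑ p ∈ Nat.primesLE ⌊√x⌋₊,
            6 * (x / Real.log x) * (1 + 2 * P) ^ k * (2 * (p : ℝ)⁻¹) :=
          add_le_add (card_almostPrimesLE_one_le hx) (Finset.sum_le_sum hquot)
      _ = 6 * (x / Real.log x) *
            (1 + (1 + 2 * P) ^ k * (2 * ∑ p ∈ Nat.primesLE ⌊√x⌋₊, (p : ℝ)⁻¹)) := by
          rw [← Finset.mul_sum, ← Finset.mul_sum]
          ring
      _ ≤ 6 * (x / Real.log x) * ((1 + 2 * P) ^ k + (1 + 2 * P) ^ k * (2 * P)) := by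
          gcongr
          exact one_le_pow₀ (by linarith)
      _ = 6 * (x / Real.log x) * (1 + 2 * P) ^ (k + 1) := by ring

/-! ### Biquadratic fields -/

theorem absDisc_eq_natAbs_discr (K : IntermediateField ℚ ℂ) [NumberField K] :
    absDisc K = (discr K).natAbs :=
  dif_pos (inferInstanceAs (FiniteDimensional ℚ K))

theorem sq_natAbs_dvd_absDisc {K : IntermediateField ℚ ℂ} (hK : Module.finrank ℚ K = 4) {a : ℤ}
    (ha : Squarefree a) (hx : ∃ x ∈ K, x ^ 2 = (a : ℂ)) : a.natAbs ^ 2 ∣ absDisc K := by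
  have : FiniteDimensional ℚ K := Module.finite_of_finrank_pos (by omega)
  have : NumberField K := ⟨⟩
  obtain ⟨x, hxK, hx⟩ := hx
  have hx' : (⟨x, hxK⟩ : K) ^ 2 = a := Subtype.ext (by simpa using hx)
  rw [absDisc_eq_natAbs_discr, ← Int.natAbs_pow, Int.natAbs_dvd_natAbs]
  exact sq_dvd_discr_of_sq_eq hK ha hx'

theorem absDisc_ne_zero {K : IntermediateField ℚ ℂ} (hK : Module.finrank ℚ K = 4) :
    absDisc K ≠ 0 := by
  have : FiniteDimensional ℚ K := Module.finite_of_finrank_pos (by omega)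
  have : NumberField K := ⟨⟩
  rw [absDisc_eq_natAbs_discr]
  exact Int.natAbs_ne_zero.mpr (discr_ne_zero K)

theorem exists_mem_biquad_sq_eq_left (a b : ℤ) : ∃ x ∈ biquad a b, x ^ 2 = (a : ℂ) := by
  obtain ⟨x, hx⟩ := IsAlgClosed.exists_pow_nat_eq (a : ℂ) two_pos
  exact ⟨x, subset_adjoin _ _ (Or.inl hx), hx⟩

theorem exists_mem_biquad_sq_eq_right (a b : ℤ) : ∃ x ∈ biquad a b, x ^ 2 = (b : ℂ) := by
  obtain ⟨x, hx⟩ := IsAlgClosed.exists_pow_nat_eq (b : ℂ) two_pos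
  exact ⟨x, subset_adjoin _ _ (Or.inr hx), hx⟩

theorem sq_lcm_dvd_absDisc_biquad {a b : ℤ} (ha : Squarefree a) (hb : Squarefree b)
    (hab : Module.finrank ℚ (biquad a b) = 4) :
    (a.natAbs.lcm b.natAbs) ^ 2 ∣ absDisc (biquad a b) := by
  rw [← Nat.pow_lcm_pow]
  exact Nat.lcm_dvd (sq_natAbs_dvd_absDisc hab ha (exists_mem_biquad_sq_eq_left a b))
    (sq_natAbs_dvd_absDisc hab hb (exists_mem_biquad_sq_eq_right a b))

/-- The divisors of `m` in `ℤ`, the possible radicands `a` with `a ∣ m`; empty for `m = 0`, as is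
`Nat.divisors 0`. -/
def signedDivisors (m : ℕ) : Finset ℤ :=
  m.divisors.image (fun d : ℕ ↦ (d : ℤ)) ∪ m.divisors.image (fun d : ℕ ↦ -(d : ℤ))

theorem mem_signedDivisors {m : ℕ} (hm : m ≠ 0) {a : ℤ} (ha : a.natAbs ∣ m) :
    a ∈ signedDivisors m := by
  have hmem : a.natAbs ∈ m.divisors := Nat.mem_divisors.mpr ⟨ha, hm⟩
  rcases Int.natAbs_eq a with h | h
  · exact Finset.mem_union_left _ (Finset.mem_image.mpr ⟨_, hmem, h.symm⟩)
  · exact Finset.mem_union_right _ (Finset.mem_image.mpr ⟨_, hmem, h.symm⟩)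

theorem card_signedDivisors_le {m : ℕ} (hm : m ≠ 0) :
    (signedDivisors m).card ≤ 2 ^ (Ω m + 1) := calc
  (signedDivisors m).card ≤ m.divisors.card + m.divisors.card :=
    (Finset.card_union_le _ _).trans (add_le_add Finset.card_image_le Finset.card_image_le)
  _ ≤ 2 ^ Ω m + 2 ^ Ω m :=
    add_le_add (card_divisors_le_two_pow_cardFactors hm) (card_divisors_le_two_pow_cardFactors hm)
  _ = 2 ^ (Ω m + 1) := by ring

/-- The fields `ℚ(√a, √b)` with `a` and `b` dividing `m`, not necessarily of degree `4`. -/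
def biquadsOfDvd (m : ℕ) : Finset (IntermediateField ℚ ℂ) :=
  (signedDivisors m ×ˢ signedDivisors m).image fun q ↦ biquad q.1 q.2

theorem card_biquadsOfDvd_le {m : ℕ} (hm : m ≠ 0) : (biquadsOfDvd m).card ≤ 4 ^ (Ω m + 1) := calc
  (biquadsOfDvd m).card ≤ (signedDivisors m).card * (signedDivisors m).card :=
    Finset.card_image_le.trans (Finset.card_product _ _).le
  _ ≤ 2 ^ (Ω m + 1) * 2 ^ (Ω m + 1) :=
    Nat.mul_le_mul (card_signedDivisors_le hm) (card_signedDivisors_le hm)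
  _ = 4 ^ (Ω m + 1) := by rw [← mul_pow]; rfl

/-- The biquadratic subfields of `ℂ` whose discriminant has at most `k` distinct prime factors and
absolute value at most `X`. Requiring squarefree radicands loses no biquadratic field: it only
normalizes the generators. -/
def biquadraticFieldsLE (k : ℕ) (X : ℝ) : Set (IntermediateField ℚ ℂ) :=
  {K | (∃ a b : ℤ, Squarefree a ∧ Squarefree b ∧ Module.finrank ℚ K = 4 ∧ K = biquad a b) ∧
    (absDisc K).primeFactors.card ≤ k ∧ (absDisc K : ℝ) ≤ X}

theorem biquadraticFieldsLE_subset (k : ℕ) (X : ℝ) :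
    biquadraticFieldsLE k X ⊆ (almostPrimesLE k √X).biUnion biquadsOfDvd := by
  rintro _ ⟨⟨a, b, ha, hb, hab, rfl⟩, hω, hX⟩
  set m := a.natAbs.lcm b.natAbs
  have hm : Squarefree m :=
    squarefree_lcm (Int.squarefree_natAbs.mpr ha) (Int.squarefree_natAbs.mpr hb)
  have hdisc : absDisc (biquad a b) ≠ 0 := absDisc_ne_zero hab
  have hsq : m ^ 2 ∣ absDisc (biquad a b) := sq_lcm_dvd_absDisc_biquad ha hb hab
  have hΩ : Ω m ≤ k :=
    (cardFactors_le_card_primeFactors hm (dvd_of_mul_left_dvd (sq m ▸ hsq)) hdisc).trans hω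
  have hmX : (m : ℝ) ≤ √X := Real.le_sqrt_of_sq_le <| le_trans
    (by exact_mod_cast Nat.le_of_dvd (Nat.pos_of_ne_zero hdisc) hsq) hX
  refine Finset.mem_biUnion.mpr ⟨m, mem_almostPrimesLE.mpr ⟨hm.ne_zero, hmX, hΩ⟩,
    Finset.mem_image.mpr ⟨(a, b), Finset.mem_product.mpr ⟨?_, ?_⟩, rfl⟩⟩
  · exact mem_signedDivisors hm.ne_zero (Nat.dvd_lcm_left _ _)
  · exact mem_signedDivisors hm.ne_zero (Nat.dvd_lcm_right _ _)

theorem finite_biquadraticFieldsLE (k : ℕ) (X : ℝ) : (biquadraticFieldsLE k X).Finite :=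
  (Finset.finite_toSet _).subset (biquadraticFieldsLE_subset k X)

theorem ncard_biquadraticFieldsLE_le (k : ℕ) (X : ℝ) :
    (biquadraticFieldsLE k X).ncard ≤ (almostPrimesLE k √X).card * 4 ^ (k + 1) := by
  have hsub := Set.ncard_le_ncard (biquadraticFieldsLE_subset k X)
  rw [Set.ncard_coe_finset] at hsub
  refine hsub.trans (Finset.card_biUnion_le_card_mul _ _ _ fun m hm ↦ ?_)
  obtain ⟨hm0, -, hΩ⟩ := mem_almostPrimesLE.mp hm
  exact (card_biquadsOfDvd_le hm0).trans (Nat.pow_le_pow_right (by norm_num) (by omega))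

theorem eventually_card_almostPrimesLE_sqrt_le (k : ℕ) :
    ∀ᶠ X : ℝ in atTop, ((almostPrimesLE (k + 1) √X).card : ℝ) ≤
      12 * 145 ^ k * (√X / Real.log X) * Real.log (Real.log X) ^ k := by
  filter_upwards [eventually_gt_atTop 1, eventually_primeReciprocalSum_le,
    (Real.tendsto_log_atTop.comp Real.tendsto_log_atTop).eventually_ge_atTop 1]
    with X hX hMertens (hloglog : 1 ≤ Real.log (Real.log X))
  have hlog : 0 < Real.log X := Real.log_pos hX
  have hnonneg := primeReciprocalSum_nonneg √X
  have hmono : primeReciprocalSum √X ≤ primeReciprocalSum X :=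
    primeReciprocalSum_mono (Real.sqrt_le_self_iff.mpr (Or.inr hX.le))
  calc ((almostPrimesLE (k + 1) √X).card : ℝ)
      ≤ 6 * (√X / Real.log √X) * (1 + 2 * primeReciprocalSum √X) ^ k :=
        card_almostPrimesLE_le k (one_lt_sqrt hX)
    _ ≤ 6 * (√X / (Real.log X / 2)) * (145 * Real.log (Real.log X)) ^ k := by
        rw [Real.log_sqrt (by linarith)]
        gcongr
        linarith
    _ = 12 * 145 ^ k * (√X / Real.log X) * Real.log (Real.log X) ^ k := by
        rw [mul_pow]
        field_simp
        ring

theorem stmt17_general (k : ℕ) :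
    ∃ C : ℝ, ∀ᶠ X : ℝ in atTop, (biquadraticFieldsLE (k + 1) X).Finite ∧
      ((biquadraticFieldsLE (k + 1) X).ncard : ℝ) ≤
        C * (√X / Real.log X) * Real.log (Real.log X) ^ k := by
  refine ⟨4 ^ (k + 2) * (12 * 145 ^ k), ?_⟩
  filter_upwards [eventually_card_almostPrimesLE_sqrt_le k] with X hX
  refine ⟨finite_biquadraticFieldsLE (k + 1) X, ?_⟩
  calc ((biquadraticFieldsLE (k + 1) X).ncard : ℝ)
      ≤ (almostPrimesLE (k + 1) √X).card * 4 ^ (k + 2) := by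
        exact_mod_cast ncard_biquadraticFieldsLE_le (k + 1) X
    _ ≤ 12 * 145 ^ k * (√X / Real.log X) * Real.log (Real.log X) ^ k * 4 ^ (k + 2) := by gcongr
    _ = _ := by ring

theorem countSn_le_ncard {n : ℕ} {X : ℝ} (h : (biquadraticFieldsLE (n + 2) X).Finite) :
    countSn n X ≤ (biquadraticFieldsLE (n + 2) X).ncard :=
  Set.ncard_le_ncard (fun _ ⟨⟨a, b, _, _, ha, hb, hdeg, hK⟩, hω, hX⟩ ↦
    ⟨⟨a, b, ha, hb, hdeg, hK⟩, hω.le, hX⟩) h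

theorem stmt17 (n : ℕ) (hn : 1 ≤ n) :
    ∃ C : ℝ, ∀ᶠ X : ℝ in atTop,
      (countSn n X : ℝ) ≤
        C * (Real.sqrt X / Real.log X) * Real.log (Real.log X) ^ (n + 1) := by
  obtain ⟨C, hC⟩ := stmt17_general (n + 1)
  exact ⟨C, hC.mono fun _ ⟨hfin, hle⟩ ↦ (Nat.cast_le.mpr (countSn_le_ncard hfin)).trans hle⟩
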